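/- Let α be a value-coherent value Ψ-PER (α_ψ(V, V') implies Tm(α)_ψ(V, V') for all ψ, V, V'). Let β assign to every morphism ψ : Ψ' → Ψ and every term M ∈ T(Ψ') a value Ψ'-PER β_ψ⟨M⟩, such that (i) for every ψ' : Ψ'' → Ψ', the restriction of β_ψ⟨M⟩ along ψ' (the family sending ψ'' to (β_ψ⟨M⟩)_{ψ' ∘ ψ''}) equals β_{ψ ∘ ψ'}⟨M⟨ψ'⟩⟩, and (ii) β_ψ⟨M⟩ = β_ψ⟨M'⟩ whenever Tm(α)_ψ(M, M'). Let γ be a family with γ_ψ contained in α_ψ for every ψ : Ψ' → Ψ. Let N and N' be open terms, i.e., families assigning to every ψ : Ψ' → Ψ a map N_ψ : T(Ψ') → T(Ψ') satisfying the naturality law (N_ψ(M))⟨ψ'⟩ = N_{ψ ∘ ψ'}(M⟨ψ'⟩), and assume N and N' are eager: for every ψ and M, N_ψ(M) ⇓ W if and only if there exists a value V with M ⇓ V and N_ψ(V) ⇓ W (and likewise for N'). If for every morphism ψ : Ψ' → Ψ and all M, M' with γ_ψ(M, M') one has Tm(β_ψ⟨M⟩)_{id}(N_ψ(M), N'_ψ(M')),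 then for every morphism ψ : Ψ' → Ψ and all M, M' with Tm(γ)_ψ(M, M') one has Tm(β_ψ⟨M⟩)_{id}(N_ψ(M), N'_ψ(M')). -/

import Mathlib

/-!
Fix `ψ₁`, `ψ₂` and let `M₁, M₂, M₁₂` (and primed versions) be the values supplied by
`Tm γ ψ M M'`. By eagerness, `N` at `M⟨ψ₁⟩`, `M₁⟨ψ₂⟩` and `M⟨ψ₂ ≫ ψ₁⟩` evaluates as `N` at
`M₁`, `M₂` and `M₁₂`. The hypothesis applied to `γ M₁ M₁'` gives all the required
evaluations at `ψ₁` and `ψ₂`, and reduces the problem to comparing the value of `N` at `M₂`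
with that at `M₁₂`, and likewise for `N'` and the primed terms.

The family `γ` need not be symmetric or transitive, so the comparison goes through a zigzag.
The definition of `Tm γ` gives `γ` at the pairs `(M₂, M₂')` and `(M₂, M₁₂)`; taking one
substitution to be the identity also gives `(M₁₂, M₁₂')` and `(M₁₂, M₁₂)` (`Tm.exists_eval`).
The hypothesis thus yields
`N'(M₂') ~ N(M₂) ~ N'(M₁₂) ~ N(M₁₂) ~ N'(M₁₂')`, where `~` is one fixed component of `β`,
which is symmetric and transitive.

That a single component of `β` is involved follows from value-coherence of `α`: a term in
`Tm α` is `Tm α`-related to its value (`Tm.eval_right`), so `β` does not distinguish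
`M₁⟨ψ₂⟩`, `M₂`, `M₁₂` and `M⟨ψ₂ ≫ ψ₁⟩`.
-/

open CategoryTheory

universe u v w

/-- A contravariant action of a category of dimension contexts on terms,
together with a deterministic step relation on terms at each context. -/
structure TermSystem (C : Type u) [Category.{v} C] where
  T : C → Type w
  sub : ∀ {Ψ' Ψ : C}, (Ψ' ⟶ Ψ) → T Ψ → T Ψ'
  sub_id : ∀ {Ψ : C} (M : T Ψ), sub (𝟙 Ψ) M = M
  sub_comp : ∀ {Ψ'' Ψ' Ψ : C} (ψ' : Ψ'' ⟶ Ψ') (ψ : Ψ' ⟶ Ψ) (M : T Ψ),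
      sub ψ' (sub ψ M) = sub (ψ' ≫ ψ) M
  step : ∀ {Ψ : C}, T Ψ → T Ψ → Prop
  step_det : ∀ {Ψ : C} {M N N' : T Ψ}, step M N → step M N' → N = N'

namespace TermSystem

variable {C : Type u} [Category.{v} C] (S : TermSystem C)

/-- A term is a value if it takes no step. -/
def IsValue {Ψ : C} (M : S.T Ψ) : Prop := ∀ N, ¬ S.step M N

/-- `M ⇓ V`: `M` reaches `V` by the reflexive-transitive closure of the step
relation, and `V` is a value. -/
def Eval {Ψ : C} (M V : S.T Ψ) : Prop :=
  Relation.ReflTransGen S.step M V ∧ S.IsValue V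

/-- A value `Ψ`-PER: a family of symmetric transitive relations, indexed by
morphisms into `Ψ`, relating only values. -/
def IsValuePER {Ψ : C}
    (α : ∀ Ψ' : C, (Ψ' ⟶ Ψ) → S.T Ψ' → S.T Ψ' → Prop) : Prop :=
  (∀ (Ψ' : C) (ψ : Ψ' ⟶ Ψ) (M M' : S.T Ψ'), α Ψ' ψ M M' → α Ψ' ψ M' M) ∧
  (∀ (Ψ' : C) (ψ : Ψ' ⟶ Ψ) (M M' M'' : S.T Ψ'),
      α Ψ' ψ M M' → α Ψ' ψ M' M'' → α Ψ' ψ M M'') ∧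
  (∀ (Ψ' : C) (ψ : Ψ' ⟶ Ψ) (M M' : S.T Ψ'),
      α Ψ' ψ M M' → S.IsValue M ∧ S.IsValue M')

/-- The coherent extension `Tm(α)_ψ` of a family `α` to terms. -/
def Tm {Ψ : C} (α : ∀ Ψ' : C, (Ψ' ⟶ Ψ) → S.T Ψ' → S.T Ψ' → Prop)
    {Ψ' : C} (ψ : Ψ' ⟶ Ψ) (M M' : S.T Ψ') : Prop :=
  ∀ (Ψ₁ Ψ₂ : C) (ψ₁ : Ψ₁ ⟶ Ψ') (ψ₂ : Ψ₂ ⟶ Ψ₁),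
    ∃ (M₁ : S.T Ψ₁) (M₂ M₁₂ : S.T Ψ₂) (M₁' : S.T Ψ₁) (M₂' M₁₂' : S.T Ψ₂),
      S.Eval (S.sub ψ₁ M) M₁ ∧ S.Eval (S.sub ψ₂ M₁) M₂ ∧
      S.Eval (S.sub (ψ₂ ≫ ψ₁) M) M₁₂ ∧
      S.Eval (S.sub ψ₁ M') M₁' ∧ S.Eval (S.sub ψ₂ M₁') M₂' ∧
      S.Eval (S.sub (ψ₂ ≫ ψ₁) M') M₁₂' ∧
      α Ψ₂ (ψ₂ ≫ ψ₁ ≫ ψ) M₂ M₂' ∧ α Ψ₂ (ψ₂ ≫ ψ₁ ≫ ψ) M₂ M₁₂ ∧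
      α Ψ₂ (ψ₂ ≫ ψ₁ ≫ ψ) M₂' M₁₂'

end TermSystem

namespace TermSystem

variable {C : Type u} [Category.{v} C] {S : TermSystem C}

theorem Eval.unique {Ψ : C} {M V W : S.T Ψ} (hV : S.Eval M V) (hW : S.Eval M W) : V = W := by
  obtain ⟨hV, vV⟩ := hV
  obtain ⟨hW, vW⟩ := hW
  induction hV using Relation.ReflTransGen.head_induction_on with
  | refl =>
    rcases hW.cases_head with h | ⟨c, hc, -⟩
    · exact h
    · exact absurd hc (vV c)
  | head hs _ ih =>
    rcases hW.cases_head with h | ⟨c, hc, hcW⟩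
    · subst h
      exact absurd hs (vW _)
    · obtain rfl := S.step_det hs hc
      exact ih hcW

theorem Eval.self {Ψ : C} {M V : S.T Ψ} (h : S.Eval M V) : S.Eval V V :=
  ⟨Relation.ReflTransGen.refl, h.2⟩

/-- The single-substitution content of `Tm`: the values of `M⟨ψ₁⟩` and `M'⟨ψ₁⟩` are related,
and each is related to itself even when `α` is not a PER. -/
theorem Tm.exists_eval {Ψ : C} {α : ∀ Ψ' : C, (Ψ' ⟶ Ψ) → S.T Ψ' → S.T Ψ' → Prop}
    {Ψ' : C} {ψ : Ψ' ⟶ Ψ} {M M' : S.T Ψ'} (h : S.Tm α ψ M M') {Ψ₁ : C} (ψ₁ : Ψ₁ ⟶ Ψ') :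
    ∃ V V' : S.T Ψ₁, S.Eval (S.sub ψ₁ M) V ∧ S.Eval (S.sub ψ₁ M') V' ∧
      α Ψ₁ (ψ₁ ≫ ψ) V V' ∧ α Ψ₁ (ψ₁ ≫ ψ) V V ∧ α Ψ₁ (ψ₁ ≫ ψ) V' V' := by
  obtain ⟨V, V₂, V₁₂, V', V₂', V₁₂', e1, e2, e3, e1', e2', e3', r, r1, r2⟩ :=
    h Ψ₁ Ψ₁ ψ₁ (𝟙 Ψ₁)
  rw [S.sub_id] at e2 e2'
  rw [Category.id_comp] at e3 e3' r r1 r2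
  obtain rfl := e1.self.unique e2
  obtain rfl := e1.unique e3
  obtain rfl := e1'.self.unique e2'
  obtain rfl := e1'.unique e3'
  exact ⟨V, V', e1, e1', r, r1, r2⟩

theorem Tm.sub {Ψ : C} {α : ∀ Ψ' : C, (Ψ' ⟶ Ψ) → S.T Ψ' → S.T Ψ' → Prop}
    {Ψ' : C} {ψ : Ψ' ⟶ Ψ} {M M' : S.T Ψ'} (h : S.Tm α ψ M M') {Ψ₀ : C} (ψ₀ : Ψ₀ ⟶ Ψ') :
    S.Tm α (ψ₀ ≫ ψ) (S.sub ψ₀ M) (S.sub ψ₀ M') := by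
  intro Ψ₁ Ψ₂ ψ₁ ψ₂
  have := h Ψ₁ Ψ₂ (ψ₁ ≫ ψ₀) ψ₂
  simpa only [S.sub_comp, Category.assoc] using this

theorem Tm.mono {Ψ : C} {γ α : ∀ Ψ' : C, (Ψ' ⟶ Ψ) → S.T Ψ' → S.T Ψ' → Prop}
    (hγ : ∀ (Ψ' : C) (ψ : Ψ' ⟶ Ψ) (M M' : S.T Ψ'), γ Ψ' ψ M M' → α Ψ' ψ M M')
    {Ψ' : C} {ψ : Ψ' ⟶ Ψ} {M M' : S.T Ψ'} (h : S.Tm γ ψ M M') : S.Tm α ψ M M' := by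
  intro Ψ₁ Ψ₂ ψ₁ ψ₂
  obtain ⟨V, V₂, V₁₂, V', V₂', V₁₂', e1, e2, e3, e1', e2', e3', r, r1, r2⟩ := h Ψ₁ Ψ₂ ψ₁ ψ₂
  exact ⟨V, V₂, V₁₂, V', V₂', V₁₂', e1, e2, e3, e1', e2', e3',
    hγ _ _ _ _ r, hγ _ _ _ _ r1, hγ _ _ _ _ r2⟩

/-- For a value-coherent value PER, a term of `Tm α` is related to its own value. -/
theorem Tm.eval_right {Ψ : C} {α : ∀ Ψ' : C, (Ψ' ⟶ Ψ) → S.T Ψ' → S.T Ψ' → Prop}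
    (hα : S.IsValuePER α)
    (hcoh : ∀ (Ψ' : C) (ψ : Ψ' ⟶ Ψ) (V V' : S.T Ψ'), α Ψ' ψ V V' → S.Tm α ψ V V')
    {Ψ' : C} {ψ : Ψ' ⟶ Ψ} {M M' V : S.T Ψ'} (h : S.Tm α ψ M M') (hV : S.Eval M V) :
    S.Tm α ψ M V := by
  obtain ⟨sy, tr, -⟩ := hα
  have hVV : S.Tm α ψ V V := by
    obtain ⟨W, _, e, -, -, r, -⟩ := h.exists_eval (𝟙 Ψ')
    rw [S.sub_id] at e
    rw [Category.id_comp] at r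
    obtain rfl := hV.unique e
    exact hcoh _ _ _ _ r
  intro Ψ₁ Ψ₂ ψ₁ ψ₂
  obtain ⟨M₁, M₂, M₁₂, -, -, -, e1, e2, e3, -, -, -, -, r1, -⟩ := h Ψ₁ Ψ₂ ψ₁ ψ₂
  obtain ⟨V₁, V₂, V₁₂, -, -, -, f1, f2, f3, -, -, -, -, s1, -⟩ := hVV Ψ₁ Ψ₂ ψ₁ ψ₂
  -- The substitutions `𝟙` and `ψ₂ ≫ ψ₁` compare the value of `V⟨ψ₂ ≫ ψ₁⟩` with that of
  -- `M⟨ψ₂ ≫ ψ₁⟩`.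
  obtain ⟨W, W₂, W₁₂, -, -, -, g1, g2, g3, -, -, -, -, t1, -⟩ := h Ψ' Ψ₂ (𝟙 Ψ') (ψ₂ ≫ ψ₁)
  rw [S.sub_id] at g1
  obtain rfl := hV.unique g1
  rw [Category.comp_id] at g3
  rw [Category.id_comp, Category.assoc] at t1
  obtain rfl := f3.unique g2
  obtain rfl := e3.unique g3
  exact ⟨M₁, M₂, M₁₂, V₁, V₂, V₁₂, e1, e2, e3, f1, f2, f3,
    tr _ _ _ _ _ r1 (tr _ _ _ _ _ (sy _ _ _ _ t1) (sy _ _ _ _ s1)), r1, s1⟩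

end TermSystem

/-- **Elimination lemma.** Eager open terms which send `γ`-related values to
`Tm(β)`-related results also send `Tm(γ)`-related terms to `Tm(β)`-related
results. -/
theorem elimination {C : Type u} [Category.{v} C] (S : TermSystem C)
    {Ψ : C}
    (α : ∀ Ψ' : C, (Ψ' ⟶ Ψ) → S.T Ψ' → S.T Ψ' → Prop)
    (hα : S.IsValuePER α)
    (hcoh : ∀ (Ψ' : C) (ψ : Ψ' ⟶ Ψ) (V V' : S.T Ψ'),
        α Ψ' ψ V V' → S.Tm α ψ V V')
    (β : ∀ (Ψ' : C) (ψ : Ψ' ⟶ Ψ), S.T Ψ' →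
        ∀ Ψ'' : C, (Ψ'' ⟶ Ψ') → S.T Ψ'' → S.T Ψ'' → Prop)
    (hβper : ∀ (Ψ' : C) (ψ : Ψ' ⟶ Ψ) (M : S.T Ψ'), S.IsValuePER (β Ψ' ψ M))
    (hβrestrict : ∀ (Ψ' : C) (ψ : Ψ' ⟶ Ψ) (M : S.T Ψ')
        (Ψ'' : C) (ψ' : Ψ'' ⟶ Ψ') (Ψ''' : C) (ψ'' : Ψ''' ⟶ Ψ''),
        β Ψ' ψ M Ψ''' (ψ'' ≫ ψ') = β Ψ'' (ψ' ≫ ψ) (S.sub ψ' M) Ψ''' ψ'')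
    (hβeq : ∀ (Ψ' : C) (ψ : Ψ' ⟶ Ψ) (M M' : S.T Ψ'),
        S.Tm α ψ M M' → β Ψ' ψ M = β Ψ' ψ M')
    (γ : ∀ Ψ' : C, (Ψ' ⟶ Ψ) → S.T Ψ' → S.T Ψ' → Prop)
    (hγ : ∀ (Ψ' : C) (ψ : Ψ' ⟶ Ψ) (M M' : S.T Ψ'), γ Ψ' ψ M M' → α Ψ' ψ M M')
    (N N' : ∀ (Ψ' : C), (Ψ' ⟶ Ψ) → S.T Ψ' → S.T Ψ')
    (hNnat : ∀ (Ψ' : C) (ψ : Ψ' ⟶ Ψ) (Ψ'' : C) (ψ' : Ψ'' ⟶ Ψ') (M : S.T Ψ'),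
        S.sub ψ' (N Ψ' ψ M) = N Ψ'' (ψ' ≫ ψ) (S.sub ψ' M))
    (hN'nat : ∀ (Ψ' : C) (ψ : Ψ' ⟶ Ψ) (Ψ'' : C) (ψ' : Ψ'' ⟶ Ψ') (M : S.T Ψ'),
        S.sub ψ' (N' Ψ' ψ M) = N' Ψ'' (ψ' ≫ ψ) (S.sub ψ' M))
    (hNeager : ∀ (Ψ' : C) (ψ : Ψ' ⟶ Ψ) (M W : S.T Ψ'),
        S.Eval (N Ψ' ψ M) W ↔ ∃ V : S.T Ψ', S.Eval M V ∧ S.Eval (N Ψ' ψ V) W)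
    (hN'eager : ∀ (Ψ' : C) (ψ : Ψ' ⟶ Ψ) (M W : S.T Ψ'),
        S.Eval (N' Ψ' ψ M) W ↔ ∃ V : S.T Ψ', S.Eval M V ∧ S.Eval (N' Ψ' ψ V) W)
    (h : ∀ (Ψ' : C) (ψ : Ψ' ⟶ Ψ) (M M' : S.T Ψ'), γ Ψ' ψ M M' →
        S.Tm (β Ψ' ψ M) (𝟙 Ψ') (N Ψ' ψ M) (N' Ψ' ψ M')) :
    ∀ (Ψ' : C) (ψ : Ψ' ⟶ Ψ) (M M' : S.T Ψ'), S.Tm γ ψ M M' →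
      S.Tm (β Ψ' ψ M) (𝟙 Ψ') (N Ψ' ψ M) (N' Ψ' ψ M') := by
  intro Ψ' ψ M M' hM Ψ₁ Ψ₂ ψ₁ ψ₂
  obtain ⟨M₁, M₂, M₁₂, M₁', M₂', M₁₂', e1, e2, e3, e1', e2', e3', g, g1, -⟩ :=
    hM Ψ₁ Ψ₂ ψ₁ ψ₂
  have gM₁ : γ Ψ₁ (ψ₁ ≫ ψ) M₁ M₁' := by
    obtain ⟨V, V', a, a', r, -⟩ := hM.exists_eval ψ₁
    obtain rfl := e1.unique a
    obtain rfl := e1'.unique a'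
    exact r
  obtain ⟨gM₁₂, gM₁₂r⟩ :
      γ Ψ₂ (ψ₂ ≫ ψ₁ ≫ ψ) M₁₂ M₁₂' ∧ γ Ψ₂ (ψ₂ ≫ ψ₁ ≫ ψ) M₁₂ M₁₂ := by
    obtain ⟨V, V', a, a', r, rr, -⟩ := hM.exists_eval (ψ₂ ≫ ψ₁)
    obtain rfl := e3.unique a
    obtain rfl := e3'.unique a'
    rw [Category.assoc] at r rr
    exact ⟨r, rr⟩
  -- All components of `β` that occur are identified with the one at `M₂`.
  have b₁₂ : β Ψ₂ (ψ₂ ≫ ψ₁ ≫ ψ) M₁₂ = β Ψ₂ (ψ₂ ≫ ψ₁ ≫ ψ) M₂ :=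
    (hβeq _ _ _ _ (hcoh _ _ _ _ (hγ _ _ _ _ g1))).symm
  have bM : β Ψ' ψ M Ψ₂ (ψ₂ ≫ ψ₁) = β Ψ₂ (ψ₂ ≫ ψ₁ ≫ ψ) M₂ Ψ₂ (𝟙 Ψ₂) := by
    have t := ((hM.mono hγ).sub (ψ₂ ≫ ψ₁)).eval_right hα hcoh e3
    have r := hβrestrict Ψ' ψ M Ψ₂ (ψ₂ ≫ ψ₁) Ψ₂ (𝟙 Ψ₂)
    rw [hβeq _ _ _ _ t, Category.id_comp, Category.assoc, b₁₂] at r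
    exact r
  have bM₁ : β Ψ₁ (ψ₁ ≫ ψ) M₁ Ψ₂ ψ₂ = β Ψ₂ (ψ₂ ≫ ψ₁ ≫ ψ) M₂ Ψ₂ (𝟙 Ψ₂) := by
    have t := ((hcoh _ _ _ _ (hγ _ _ _ _ gM₁)).sub ψ₂).eval_right hα hcoh e2
    have r := hβrestrict Ψ₁ (ψ₁ ≫ ψ) M₁ Ψ₂ ψ₂ Ψ₂ (𝟙 Ψ₂)
    rw [hβeq _ _ _ _ t, Category.id_comp] at r
    exact r
  obtain ⟨sy, tr, -⟩ := hβper Ψ₂ (ψ₂ ≫ ψ₁ ≫ ψ) M₂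
  replace sy := sy Ψ₂ (𝟙 Ψ₂)
  replace tr := tr Ψ₂ (𝟙 Ψ₂)
  have key : ∀ A B, γ Ψ₂ (ψ₂ ≫ ψ₁ ≫ ψ) A B →
      ∃ X Y, S.Eval (N Ψ₂ (ψ₂ ≫ ψ₁ ≫ ψ) A) X ∧ S.Eval (N' Ψ₂ (ψ₂ ≫ ψ₁ ≫ ψ) B) Y ∧
        β Ψ₂ (ψ₂ ≫ ψ₁ ≫ ψ) A Ψ₂ (𝟙 Ψ₂) X Y := by
    intro A B hAB
    obtain ⟨X, Y, a, b, r, -⟩ := (h _ _ _ _ hAB).exists_eval (𝟙 Ψ₂)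
    rw [S.sub_id] at a b
    rw [Category.comp_id] at r
    exact ⟨X, Y, a, b, r⟩
  -- The zigzag `N'(M₂') ~ N(M₂) ~ N'(M₁₂) ~ N(M₁₂) ~ N'(M₁₂')`.
  obtain ⟨X₂, Y₂, x₂, y₂, z1⟩ := key _ _ g
  obtain ⟨X, Y, x, y, z2⟩ := key _ _ g1
  obtain rfl := x₂.unique x
  obtain ⟨X₁₂, Y₁₂, x₁₂, y₁₂, z4⟩ := key _ _ gM₁₂
  obtain ⟨X, Y', x', y', z3⟩ := key _ _ gM₁₂r
  obtain rfl := x₁₂.unique x'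
  obtain rfl := y.unique y'
  rw [b₁₂] at z3 z4
  have zN := tr _ _ _ z2 (sy _ _ z3)
  have zN' := tr _ _ _ (sy _ _ z1) (tr _ _ _ zN z4)
  obtain ⟨U₁, U₂, U₁₂, U₁', U₂', U₁₂', u1, u2, u3, u1', u2', u3', s, s1, s2⟩ :=
    h _ _ _ _ gM₁ Ψ₁ Ψ₂ (𝟙 Ψ₁) ψ₂
  rw [S.sub_id] at u1 u1'
  rw [Category.comp_id] at u3 u3'
  rw [Category.comp_id, Category.comp_id, bM₁] at s s1 s2
  rw [hNnat] at u3
  rw [hN'nat] at u3'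
  obtain rfl := u3.unique ((hNeager _ _ _ _).2 ⟨M₂, e2, x₂⟩)
  obtain rfl := u3'.unique ((hN'eager _ _ _ _).2 ⟨M₂', e2', y₂⟩)
  simp only [hNnat, hN'nat, Category.comp_id, Category.assoc, bM]
  exact ⟨U₁, U₂, X₁₂, U₁', U₂', Y₁₂, (hNeager _ _ _ _).2 ⟨M₁, e1, u1⟩, u2,
    (hNeager _ _ _ _).2 ⟨M₁₂, e3, x₁₂⟩, (hN'eager _ _ _ _).2 ⟨M₁', e1', u1'⟩, u2',
    (hN'eager _ _ _ _).2 ⟨M₁₂', e3', y₁₂⟩, s, tr _ _ _ s1 zN, tr _ _ _ s2 zN'⟩
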